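/- For every A ∈ ℝ there is a constant C > 0 such that for all sufficiently large N, | N·[W_N^P(A) − W(A)] + log( (∫_ℝ exp(−(ψ+P)(y) + W'(A)·y) dy) / (∫_ℝ exp(−ψ(y) + W'(A)·y) dy) ) | ≤ C/N; in particular lim_{N→∞} N·[W_N^P(A) − W(A)] = −log( (∫_ℝ exp(−(ψ+P)(y) + W'(A)·y) dy) / (∫_ℝ exp(−ψ(y) + W'(A)·y) dy) ). -/

import Mathlib

noncomputable section

open MeasureTheory Real Filter

/-- The Cauchy–Born strain energy `W(A)`. -/
def W (ψ : ℝ → ℝ) (A : ℝ) : ℝ :=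
  ⨆ σ : ℝ, (σ * A - Real.log (∫ y : ℝ, Real.exp (-ψ y + σ * y)))

/-- `W_N^P(A)`, the analogue of `W` for the defect material. -/
def WNP (ψ P : ℝ → ℝ) (N : ℕ) (A : ℝ) : ℝ :=
  ⨆ σ : ℝ, (σ * A - (N : ℝ)⁻¹ *
    (Real.log (∫ y : ℝ, Real.exp (-(ψ y + P y) + σ * y)) +
     ((N : ℝ) - 1) * Real.log (∫ y : ℝ, Real.exp (-ψ y + σ * y))))

/-!
Let `F` and `G` be the cumulant generating functions of the measures `exp (-ψ) dy` and
`exp (-(ψ + P)) dy`, so that `W = F*` is the Legendre transform of `F` and, with `ε = 1 / N`,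
`W_N^P` is the Legendre transform of the perturbation `(1 - ε) F + ε G`. It is therefore enough to
show that `ε ↦ ((1 - ε) F + ε G)*(A)` has derivative `F σ₀ - G σ₀` at `0`, with an `O(ε²)` error,
where `σ₀` maximizes `σ A - F σ`.

By Chernoff's bound `F σ - σ A` is coercive, so `σ₀` exists. As `F''(σ₀)` is the variance of a
nondegenerate tilted measure, `F'` is locally invertible with Lipschitz inverse, which makes `σ₀`
maximal up to `O((B - A)²)` for the nearby slopes `B` as well. This gives `W'(A) = σ₀`. Bounding
the convex function `G` below by its tangent at `σ₀` turns the perturbed problem into the original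
one with slope `B = (A - ε G'(σ₀)) / (1 - ε) = A + O(ε)`, hence the `O(ε²)` error.
-/

open ProbabilityTheory Asymptotics
open scoped Topology

section Legendre

/-- The Legendre transform `f*(a) = sup_σ (σ a - f σ)` of a function on the line, with the junk
value `0` where the supremum is infinite. -/
def legendre (f : ℝ → ℝ) (a : ℝ) : ℝ := ⨆ σ, (σ * a - f σ)

/-- `σ₀` maximizes `σ a - F σ` and, for all slopes `b` near `a`, maximizes `σ b - F σ` up to an
error `O((b - a)²)`. -/
def IsStableMaximizer (F : ℝ → ℝ) (a σ₀ : ℝ) : Prop :=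
  ∃ K, ∀ᶠ b in 𝓝 a, ∀ σ, σ * b - F σ ≤ σ₀ * b - F σ₀ + K * (b - a) ^ 2

variable {F G : ℝ → ℝ} {a σ₀ : ℝ}

lemma legendre_mem_Icc {M : ℝ} (h : ∀ σ, σ * a - F σ ≤ M) (σ₀ : ℝ) :
    legendre F a ∈ Set.Icc (σ₀ * a - F σ₀) M :=
  ⟨le_ciSup (f := fun σ => σ * a - F σ) ⟨M, Set.forall_mem_range.2 h⟩ σ₀, ciSup_le h⟩

lemma IsStableMaximizer.legendre_eq (h : IsStableMaximizer F a σ₀) :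
    legendre F a = σ₀ * a - F σ₀ := by
  obtain ⟨K, hK⟩ := h
  obtain ⟨hge, hle⟩ := legendre_mem_Icc hK.self_of_nhds σ₀
  simp only [sub_self, ne_eq, OfNat.ofNat_ne_zero, not_false_eq_true, zero_pow, mul_zero,
    add_zero] at hle
  exact le_antisymm hle hge

lemma IsStableMaximizer.hasDerivAt_legendre (h : IsStableMaximizer F a σ₀) :
    HasDerivAt (legendre F) σ₀ a := by
  have heq := h.legendre_eq
  obtain ⟨K, hK⟩ := h
  rw [hasDerivAt_iff_isLittleO]
  refine IsBigO.trans_isLittleO (.of_bound K ?_) (isLittleO_pow_sub_sub a one_lt_two)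
  filter_upwards [hK] with b hb
  obtain ⟨hge, hle⟩ := legendre_mem_Icc hb σ₀
  rw [heq, smul_eq_mul, norm_of_nonneg (by linarith), norm_of_nonneg (by positivity)]
  rw [Real.norm_eq_abs, sq_abs]
  linarith

/-- The slope `(a - ε g) / (1 - ε)` is the one that `F` sees once `G` is replaced by its tangent
at `σ₀`. -/
lemma mul_sub_perturbation_le {g K ε σ : ℝ}
    (hF : σ * ((a - ε * g) / (1 - ε)) - F σ ≤
      σ₀ * ((a - ε * g) / (1 - ε)) - F σ₀ + K * ((a - ε * g) / (1 - ε) - a) ^ 2)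
    (hG : G σ₀ + g * (σ - σ₀) ≤ G σ) (hε₀ : 0 ≤ ε) (hε₁ : ε < 1) :
    σ * a - ((1 - ε) * F σ + ε * G σ) ≤
      σ₀ * a - ((1 - ε) * F σ₀ + ε * G σ₀) + K * (a - g) ^ 2 / (1 - ε) * ε ^ 2 := by
  have hε : 1 - ε ≠ 0 := (sub_pos.2 hε₁).ne'
  set b := (a - ε * g) / (1 - ε) with hb
  calc σ * a - ((1 - ε) * F σ + ε * G σ)
      ≤ σ * a - ((1 - ε) * F σ + ε * (G σ₀ + g * (σ - σ₀))) := by gcongr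
    _ = (1 - ε) * (σ * b - F σ) + ε * (g * σ₀ - G σ₀) := by rw [hb]; field_simp; ring
    _ ≤ (1 - ε) * (σ₀ * b - F σ₀ + K * (b - a) ^ 2) + ε * (g * σ₀ - G σ₀) := by
        have := (sub_pos.2 hε₁).le
        gcongr
    _ = _ := by rw [hb]; field_simp; ring

lemma IsStableMaximizer.legendre_perturbation (h : IsStableMaximizer F a σ₀) {g : ℝ}
    (hG : ∀ σ, G σ₀ + g * (σ - σ₀) ≤ G σ) :
    (fun ε => legendre (fun σ => (1 - ε) * F σ + ε * G σ) a - legendre F a - ε * (F σ₀ - G σ₀))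
      =O[𝓝[>] 0] fun ε => ε ^ 2 := by
  have heq := h.legendre_eq
  obtain ⟨K, hK⟩ := h
  have hslope : Tendsto (fun ε => (a - ε * g) / (1 - ε)) (𝓝 0) (𝓝 a) := by
    have : ContinuousAt (fun ε => (a - ε * g) / (1 - ε)) 0 := by fun_prop (disch := norm_num)
    simpa [ContinuousAt] using this
  have hconst : ∀ᶠ ε in 𝓝 0, K * (a - g) ^ 2 / (1 - ε) < K * (a - g) ^ 2 + 1 := by
    have : ContinuousAt (fun ε => K * (a - g) ^ 2 / (1 - ε)) 0 := by fun_prop (disch := norm_num)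
    exact this.eventually_lt_const (by simp)
  refine .of_bound (K * (a - g) ^ 2 + 1) ?_
  filter_upwards [self_mem_nhdsWithin, nhdsWithin_le_nhds (hslope.eventually hK),
    nhdsWithin_le_nhds hconst, nhdsWithin_le_nhds (eventually_lt_nhds one_pos)]
    with ε hε₀ hKε hCε hε₁
  obtain ⟨hge, hle⟩ := legendre_mem_Icc
    (fun σ => mul_sub_perturbation_le (G := G) (hKε σ) (hG σ) (le_of_lt hε₀) hε₁) σ₀
  have hC := mul_le_mul_of_nonneg_right hCε.le (sq_nonneg ε)
  rw [heq, norm_of_nonneg (by linarith), norm_of_nonneg (sq_nonneg ε)]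
  linarith

lemma IsStableMaximizer.natCast_mul_legendre_perturbation (h : IsStableMaximizer F a σ₀) {g : ℝ}
    (hG : ∀ σ, G σ₀ + g * (σ - σ₀) ≤ G σ) :
    (fun N : ℕ => (N : ℝ) * (legendre (fun σ => (1 - (N : ℝ)⁻¹) * F σ + (N : ℝ)⁻¹ * G σ) a -
      legendre F a) + (G σ₀ - F σ₀)) =O[atTop] fun N => (N : ℝ)⁻¹ := by
  have hε : Tendsto (fun N : ℕ => (N : ℝ)⁻¹) atTop (𝓝[>] 0) :=
    tendsto_inv_atTop_nhdsGT_zero.comp tendsto_natCast_atTop_atTop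
  refine ((isBigO_refl (fun N : ℕ => (N : ℝ)) atTop).mul
    ((h.legendre_perturbation hG).comp_tendsto hε)).congr' ?_ ?_
  · filter_upwards [eventually_ne_atTop 0] with N hN
    simp only [Function.comp_apply]
    field_simp
    ring
  · filter_upwards [eventually_ne_atTop 0] with N hN
    simp only [Function.comp_apply]
    field_simp

end Legendre

section Convex

variable {F : ℝ → ℝ}

lemma tangent_le_of_convexOn_univ (hF : ConvexOn ℝ Set.univ F) {x : ℝ}
    (hd : DifferentiableAt ℝ F x) (y : ℝ) : F x + deriv F x * (y - x) ≤ F y := by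
  rcases lt_trichotomy x y with hxy | rfl | hyx
  · have := hF.deriv_le_slope (Set.mem_univ x) (Set.mem_univ y) hxy hd
    rw [slope_def_field, le_div_iff₀ (sub_pos.2 hxy)] at this
    linarith
  · simp
  · have := hF.slope_le_deriv (Set.mem_univ y) (Set.mem_univ x) hyx hd
    rw [slope_def_field, div_le_iff₀ (sub_pos.2 hyx)] at this
    linarith

/-- By the inverse function theorem, for `b` near `a = F' σ₀` the maximizer `σ_b` of `σ b - F σ`
satisfies `σ_b - σ₀ = O(b - a)`, and by convexity the maximum exceeds `σ₀ b - F σ₀` by at most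
`(σ_b - σ₀) (b - a)`. -/
lemma isStableMaximizer_of_convexOn (hF : ConvexOn ℝ Set.univ F) (hd : Differentiable ℝ F)
    {σ₀ v : ℝ} (hv : v ≠ 0) (hF' : HasStrictDerivAt (deriv F) v σ₀) :
    IsStableMaximizer F (deriv F σ₀) σ₀ := by
  set s := hF'.localInverse (deriv F) v σ₀ hv
  have hs₀ : s (deriv F σ₀) = σ₀ := (hF'.eventually_left_inverse hv).self_of_nhds
  obtain ⟨K, hK⟩ := (hF'.to_localInverse hv).hasDerivAt.isBigO_sub.bound
  refine ⟨K, ?_⟩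
  filter_upwards [hK, hF'.eventually_right_inverse hv] with b hKb hsb σ
  change deriv F (s b) = b at hsb
  change ‖s b - s (deriv F σ₀)‖ ≤ K * ‖b - deriv F σ₀‖ at hKb
  rw [hs₀] at hKb
  have htangent_b : F (s b) + b * (σ - s b) ≤ F σ := by
    simpa only [hsb] using tangent_le_of_convexOn_univ hF (hd (s b)) σ
  have htangent₀ := tangent_le_of_convexOn_univ hF (hd σ₀) (s b)
  have hquad : (s b - σ₀) * (b - deriv F σ₀) ≤ K * (b - deriv F σ₀) ^ 2 :=
    calc (s b - σ₀) * (b - deriv F σ₀) ≤ ‖s b - σ₀‖ * ‖b - deriv F σ₀‖ := by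
          rw [← norm_mul]; exact Real.le_norm_self _
      _ ≤ K * ‖b - deriv F σ₀‖ * ‖b - deriv F σ₀‖ := by gcongr
      _ = K * (b - deriv F σ₀) ^ 2 := by rw [mul_assoc, ← sq, Real.norm_eq_abs, sq_abs]
  linarith

lemma strongConvexOn_univ_of_le_deriv2 (hd : Differentiable ℝ F) (hd' : Differentiable ℝ (deriv F))
    {κ : ℝ} (hκ : ∀ y, κ ≤ deriv (deriv F) y) : StrongConvexOn Set.univ κ F := by
  have hd₁ (y : ℝ) : HasDerivAt (fun y => F y - κ / 2 * ‖y‖ ^ 2) (deriv F y - κ * y) y := by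
    simp only [Real.norm_eq_abs, sq_abs]
    refine ((hd y).hasDerivAt.sub ((hasDerivAt_pow 2 y).const_mul (κ / 2))).congr_deriv ?_
    push_cast; ring
  have hd₂ (y : ℝ) : HasDerivAt (fun y => deriv F y - κ * y) (deriv (deriv F) y - κ) y := by
    simpa using (hd' y).hasDerivAt.fun_sub ((hasDerivAt_id y).const_mul κ)
  have hderiv : deriv (fun y => F y - κ / 2 * ‖y‖ ^ 2) = fun y => deriv F y - κ * y :=
    funext fun y => (hd₁ y).deriv
  rw [strongConvexOn_iff_convex]
  refine convexOn_univ_of_deriv2_nonneg (fun y => (hd₁ y).differentiableAt) ?_ fun y => ?_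
  · exact hderiv ▸ fun y => (hd₂ y).differentiableAt
  · rw [Function.iterate_succ_apply, Function.iterate_one, hderiv, (hd₂ y).deriv]
    exact sub_nonneg.2 (hκ y)

lemma integrable_exp_quadratic {κ : ℝ} (hκ : 0 < κ) (c d : ℝ) :
    Integrable fun y : ℝ => Real.exp (-κ * y ^ 2 + c * y + d) := by
  simpa [Complex.norm_exp, ← Complex.ofReal_pow] using
    (integrable_cexp_quadratic (b := κ) (by simpa) c d).norm

lemma integrable_exp_neg_add_mul_of_strongConvexOn {φ : ℝ → ℝ} {κ : ℝ} (hκ : 0 < κ)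
    (hφ : StrongConvexOn Set.univ κ φ) (σ : ℝ) :
    Integrable fun y => Real.exp (-φ y + σ * y) := by
  have hcont : Continuous φ :=
    continuousOn_univ.1 ((hφ.strictConvexOn hκ).convexOn.continuousOn isOpen_univ)
  have hlsc : LowerSemicontinuous fun y => φ y - κ / 2 * ‖y‖ ^ 2 :=
    Continuous.lowerSemicontinuous (by fun_prop)
  obtain ⟨c, d, hcd⟩ := (strongConvexOn_iff_convex.1 hφ).exists_affine_le_real isClosed_univ
    (hlsc.lowerSemicontinuousOn _)
  refine (integrable_exp_quadratic (half_pos hκ) (σ - c) (-d)).mono' (by fun_prop)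
    (.of_forall fun y => ?_)
  have := hcd y (Set.mem_univ y)
  rw [Real.norm_eq_abs, sq_abs] at this
  rw [Real.norm_eq_abs, Real.abs_exp, Real.exp_le_exp]
  linarith

lemma integrable_exp_neg_add_mul_of_le_deriv2 {φ : ℝ → ℝ} (hφ : ContDiff ℝ 2 φ) {κ : ℝ}
    (hκ : 0 < κ) (hφ'' : ∀ y, κ ≤ deriv (deriv φ) y) (σ : ℝ) :
    Integrable fun y => Real.exp (-φ y + σ * y) :=
  integrable_exp_neg_add_mul_of_strongConvexOn hκ
    (strongConvexOn_univ_of_le_deriv2 (hφ.differentiable two_ne_zero)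
      hφ.differentiable_deriv_two hφ'') σ

end Convex

section Cgf

variable {Ω : Type*} {mΩ : MeasurableSpace Ω} {μ : Measure Ω} {X : Ω → ℝ}

lemma iteratedDeriv_two_cgf_pos (hX : ∀ c, ¬ X =ᵐ[μ] fun _ => c) {t : ℝ}
    (ht : t ∈ interior (integrableExpSet X μ)) : 0 < iteratedDeriv 2 (cgf X μ) t := by
  have hint : t ∈ integrableExpSet X μ := interior_subset ht
  have hLp : MemLp X 2 (μ.tilted (t * X ·)) := memLp_tilted_mul ht 2
  rw [← variance_tilted_mul ht]
  refine (variance_nonneg _ _).lt_of_ne fun hvar => ?_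
  have hevar : evariance X (μ.tilted (t * X ·)) = 0 := by
    rw [← hLp.ofReal_variance_eq, ← hvar, ENNReal.ofReal_zero]
  exact hX _ ((absolutelyContinuous_tilted hint).ae_eq
    ((evariance_eq_zero_iff hLp.aemeasurable).1 hevar))

variable (hX : ∀ t, Integrable (fun ω => Real.exp (t * X ω)) μ)
include hX

lemma mem_interior_integrableExpSet (t : ℝ) : t ∈ interior (integrableExpSet X μ) := by
  simp [integrableExpSet, hX]

lemma differentiable_cgf : Differentiable ℝ (cgf X μ) := fun t =>
  (analyticAt_cgf (mem_interior_integrableExpSet hX t)).differentiableAt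

lemma hasStrictDerivAt_deriv_cgf (t : ℝ) :
    HasStrictDerivAt (deriv (cgf X μ)) (iteratedDeriv 2 (cgf X μ) t) t := by
  rw [iteratedDeriv_succ, iteratedDeriv_one]
  exact (analyticAt_cgf (mem_interior_integrableExpSet hX t)).deriv.hasStrictDerivAt

lemma convexOn_cgf : ConvexOn ℝ Set.univ (cgf X μ) := by
  refine convexOn_univ_of_deriv2_nonneg (differentiable_cgf hX)
    (fun t => (hasStrictDerivAt_deriv_cgf hX t).hasDerivAt.differentiableAt) fun t => ?_
  rw [← iteratedDeriv_eq_iterate, ← variance_tilted_mul (mem_interior_integrableExpSet hX t)]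
  exact variance_nonneg _ _

variable {a A b : ℝ} (haA : a < A) (hAb : A < b) (ha : ∃ᶠ ω in ae μ, X ω ≤ a)
  (hb : ∃ᶠ ω in ae μ, b ≤ X ω)
include haA hAb ha hb

lemma tendsto_cgf_sub_mul_cocompact :
    Tendsto (fun t => cgf X μ t - t * A) (cocompact ℝ) atTop := by
  have : IsFiniteMeasure μ :=
    (integrable_const_iff_isFiniteMeasure one_ne_zero).1 (by simpa using hX 0)
  have hpos_a : 0 < μ.real {ω | X ω ≤ a} :=
    ENNReal.toReal_pos (frequently_ae_iff.1 ha) (measure_ne_top _ _)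
  have hpos_b : 0 < μ.real {ω | b ≤ X ω} :=
    ENNReal.toReal_pos (frequently_ae_iff.1 hb) (measure_ne_top _ _)
  rw [cocompact_eq_atBot_atTop, tendsto_sup]
  constructor
  · refine tendsto_atTop_mono' _ ?_ (tendsto_atTop_add_const_right _
      (Real.log (μ.real {ω | X ω ≤ a})) (tendsto_id.atBot_mul_const_of_neg (sub_neg.2 haA)))
    filter_upwards [eventually_le_atBot 0] with t ht
    have := (Real.log_le_iff_le_exp hpos_a).2 (measure_le_le_exp_cgf a ht (hX t))
    simp only [id_eq]
    linarith
  · refine tendsto_atTop_mono' _ ?_ (tendsto_atTop_add_const_right _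
      (Real.log (μ.real {ω | b ≤ X ω})) (tendsto_id.atTop_mul_const (sub_pos.2 hAb)))
    filter_upwards [eventually_ge_atTop 0] with t ht
    have := (Real.log_le_iff_le_exp hpos_b).2 (measure_ge_le_exp_cgf b ht (hX t))
    simp only [id_eq]
    linarith

lemma exists_deriv_cgf_eq : ∃ t, deriv (cgf X μ) t = A := by
  have hdiff := differentiable_cgf hX
  obtain ⟨t, ht⟩ := (hdiff.continuous.sub (continuous_id.mul_const A)).exists_forall_le
    (tendsto_cgf_sub_mul_cocompact hX haA hAb ha hb)
  have hderiv : HasDerivAt (fun t => cgf X μ t - t * A) (deriv (cgf X μ) t - A) t := by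
    simpa using (hdiff t).hasDerivAt.fun_sub ((hasDerivAt_id t).mul_const A)
  have hmin : IsLocalMin (fun t => cgf X μ t - t * A) t := .of_forall ht
  exact ⟨t, sub_eq_zero.1 (hmin.hasDerivAt_eq_zero hderiv)⟩

lemma exists_isStableMaximizer_cgf : ∃ σ₀, IsStableMaximizer (cgf X μ) A σ₀ := by
  obtain ⟨σ₀, rfl⟩ := exists_deriv_cgf_eq hX haA hAb ha hb
  have hne (c : ℝ) : ¬ X =ᵐ[μ] fun _ => c := fun hc => by
    obtain ⟨ω, hωa, hωc⟩ := (ha.and_eventually hc).exists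
    obtain ⟨ω', hωb, hωc'⟩ := (hb.and_eventually hc).exists
    linarith
  exact ⟨σ₀, isStableMaximizer_of_convexOn (convexOn_cgf hX) (differentiable_cgf hX)
    (iteratedDeriv_two_cgf_pos hne (mem_interior_integrableExpSet hX σ₀)).ne'
    (hasStrictDerivAt_deriv_cgf hX σ₀)⟩

end Cgf

section Gibbs

/-- The unnormalized Gibbs measure `exp (-φ y) dy` of the potential `φ`. -/
def gibbs (φ : ℝ → ℝ) : Measure ℝ :=
  volume.withDensity fun y => ENNReal.ofReal (Real.exp (-φ y))

variable {φ ψ P : ℝ → ℝ}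

lemma cgf_gibbs (hφ : AEMeasurable φ) (σ : ℝ) :
    cgf id (gibbs φ) σ = Real.log (∫ y, Real.exp (-φ y + σ * y)) := by
  rw [cgf, mgf, gibbs, integral_withDensity_eq_integral_toReal_smul₀ (by fun_prop) (by simp)]
  simp [Real.exp_add, (Real.exp_pos _).le]

lemma W_eq_legendre_cgf (hψ : AEMeasurable ψ) : W ψ = legendre (cgf id (gibbs ψ)) := by
  ext A
  simp only [W, legendre, cgf_gibbs hψ]

lemma WNP_eq_legendre_cgf (hψ : AEMeasurable ψ) (hψP : AEMeasurable fun y => ψ y + P y)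
    {N : ℕ} (hN : N ≠ 0) :
    WNP ψ P N = legendre fun σ => (1 - (N : ℝ)⁻¹) * cgf id (gibbs ψ) σ +
      (N : ℝ)⁻¹ * cgf id (gibbs fun y => ψ y + P y) σ := by
  ext A
  simp only [WNP, legendre, cgf_gibbs hψ, cgf_gibbs hψP]
  congr! 3
  field_simp
  ring

lemma aemeasurable_of_integrable_exp_neg_add_mul {σ : ℝ}
    (h : Integrable fun y => Real.exp (-φ y + σ * y)) : AEMeasurable φ := by
  have := aemeasurable_of_aemeasurable_exp h.aemeasurable
  exact ((aemeasurable_id.const_mul σ).sub this).congr (.of_forall fun y => by simp)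

lemma integrable_exp_mul_gibbs {σ : ℝ} (h : Integrable fun y => Real.exp (-φ y + σ * y)) :
    Integrable (fun y => Real.exp (σ * id y)) (gibbs φ) := by
  have := aemeasurable_of_integrable_exp_neg_add_mul h
  rw [gibbs, integrable_withDensity_iff_integrable_smul₀' (by fun_prop) (by simp)]
  simpa [Real.exp_add, (Real.exp_pos _).le] using h

lemma volume_absolutelyContinuous_gibbs (hφ : AEMeasurable φ) : volume ≪ gibbs φ :=
  withDensity_absolutelyContinuous' (by fun_prop) (.of_forall fun y => by simp [Real.exp_pos])

lemma exists_isStableMaximizer_cgf_gibbs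
    (h : ∀ σ : ℝ, Integrable fun y => Real.exp (-φ y + σ * y)) (A : ℝ) :
    ∃ σ₀, IsStableMaximizer (cgf id (gibbs φ)) A σ₀ := by
  have hac := (volume_absolutelyContinuous_gibbs
    (aemeasurable_of_integrable_exp_neg_add_mul (h 0))).ae_le
  have hIic : ∃ᶠ y : ℝ in ae volume, y ≤ A - 1 :=
    frequently_ae_mem_iff.2 (by simp : volume (Set.Iic (A - 1)) ≠ 0)
  have hIci : ∃ᶠ y : ℝ in ae volume, A + 1 ≤ y :=
    frequently_ae_mem_iff.2 (by simp : volume (Set.Ici (A + 1)) ≠ 0)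
  exact exists_isStableMaximizer_cgf (fun σ => integrable_exp_mul_gibbs (h σ))
    (sub_one_lt A) (lt_add_one A) (hIic.filter_mono hac) (hIci.filter_mono hac)

end Gibbs

lemma exists_abs_le_div_and_tendsto_of_isBigO_inv {u : ℕ → ℝ} {l : ℝ}
    (h : (fun N => u N + l) =O[atTop] fun N : ℕ => (N : ℝ)⁻¹) :
    (∃ C > 0, ∃ N₀ : ℕ, ∀ N : ℕ, N₀ ≤ N → |u N + l| ≤ C / N) ∧ Tendsto u atTop (𝓝 (-l)) := by
  constructor
  · obtain ⟨C, hC, hbound⟩ := h.exists_pos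
    obtain ⟨N₀, hN₀⟩ := eventually_atTop.1 hbound.bound
    exact ⟨C, hC, N₀, fun N hN => by simpa [div_eq_mul_inv] using hN₀ N hN⟩
  · simpa using (h.trans_tendsto tendsto_inv_atTop_nhds_zero_nat).sub_const l

theorem limit_of_energy_difference_general (ψ P : ℝ → ℝ)
    (hψ : ∀ σ : ℝ, Integrable fun y => Real.exp (-ψ y + σ * y))
    (hψP : ∀ σ : ℝ, Integrable fun y => Real.exp (-(ψ y + P y) + σ * y)) (A : ℝ) :
    (∃ C > 0, ∃ N₀ : ℕ, ∀ N : ℕ, N₀ ≤ N →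
      |(N : ℝ) * (WNP ψ P N A - W ψ A) +
        Real.log
          ((∫ y : ℝ, Real.exp (-(ψ y + P y) + deriv (W ψ) A * y)) /
           (∫ y : ℝ, Real.exp (-ψ y + deriv (W ψ) A * y)))| ≤ C / N) ∧
    Tendsto (fun N : ℕ => (N : ℝ) * (WNP ψ P N A - W ψ A)) atTop
      (nhds (- Real.log
        ((∫ y : ℝ, Real.exp (-(ψ y + P y) + deriv (W ψ) A * y)) /
         (∫ y : ℝ, Real.exp (-ψ y + deriv (W ψ) A * y))))) := by
  obtain ⟨σ₀, hσ₀⟩ := exists_isStableMaximizer_cgf_gibbs hψ A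
  have hmψ := aemeasurable_of_integrable_exp_neg_add_mul (hψ 0)
  have hmψP := aemeasurable_of_integrable_exp_neg_add_mul (hψP 0)
  have hW' : deriv (W ψ) A = σ₀ := W_eq_legendre_cgf hmψ ▸ hσ₀.hasDerivAt_legendre.deriv
  have hcgf (σ : ℝ) : Integrable (fun y => Real.exp (σ * id y)) (gibbs fun y => ψ y + P y) :=
    integrable_exp_mul_gibbs (hψP σ)
  rw [hW']
  apply exists_abs_le_div_and_tendsto_of_isBigO_inv
  rw [Real.log_div (integral_exp_pos (hψP σ₀)).ne' (integral_exp_pos (hψ σ₀)).ne',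
    ← cgf_gibbs hmψ, ← cgf_gibbs hmψP, W_eq_legendre_cgf hmψ]
  refine (hσ₀.natCast_mul_legendre_perturbation (tangent_le_of_convexOn_univ (convexOn_cgf hcgf)
    (differentiable_cgf hcgf σ₀))).congr' ?_ .rfl
  filter_upwards [eventually_ne_atTop 0] with N hN
  rw [WNP_eq_legendre_cgf hmψ hmψP hN]

/-- the limit of `N [W_N^P(A) - W(A)]` with rate `1/N`. -/
theorem limit_of_energy_difference
    (ψ P : ℝ → ℝ) (κ₁ κ₂ ς₁ ς₂ : ℝ)
    (hψ : ContDiff ℝ 2 ψ) (hP : ContDiff ℝ 2 P)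
    (hκ₁ : 0 < κ₁) (hκ : κ₁ ≤ κ₂) (hς₁ : 0 < ς₁) (hς : ς₁ ≤ ς₂)
    (hψ'' : ∀ y : ℝ, κ₁ ≤ deriv (deriv ψ) y ∧ deriv (deriv ψ) y ≤ κ₂)
    (hψP'' : ∀ y : ℝ, ς₁ ≤ deriv (deriv (fun z => ψ z + P z)) y ∧
        deriv (deriv (fun z => ψ z + P z)) y ≤ ς₂)
    (A : ℝ) :
    (∃ C > 0, ∃ N₀ : ℕ, ∀ N : ℕ, N₀ ≤ N →
      |(N : ℝ) * (WNP ψ P N A - W ψ A) +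
        Real.log
          ((∫ y : ℝ, Real.exp (-(ψ y + P y) + deriv (W ψ) A * y)) /
           (∫ y : ℝ, Real.exp (-ψ y + deriv (W ψ) A * y)))| ≤ C / N) ∧
    Tendsto (fun N : ℕ => (N : ℝ) * (WNP ψ P N A - W ψ A)) atTop
      (nhds (- Real.log
        ((∫ y : ℝ, Real.exp (-(ψ y + P y) + deriv (W ψ) A * y)) /
         (∫ y : ℝ, Real.exp (-ψ y + deriv (W ψ) A * y))))) := by
  exact limit_of_energy_difference_general ψ P
    (integrable_exp_neg_add_mul_of_le_deriv2 hψ hκ₁ fun y => (hψ'' y).1)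
    (integrable_exp_neg_add_mul_of_le_deriv2 (hψ.add hP) hς₁ fun y => (hψP'' y).1) A
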